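/- Let Γ be a countable group. If Γ has a projective unitary representation on some complex Hilbert space which is both irreducible and projectively faithful, then there exists a countable group Δ admitting a faithful irreducible unitary representation on a complex Hilbert space such that Δ/Z(Δ) is isomorphic to Γ. -/

import Mathlib

/-- A projective unitary representation: a map into the unitary operators sending `1` to `id`
whose composition with the quotient by the circle is a homomorphism. -/
def IsProjUnitaryRep {G : Type*} [Group G] {H : Type*} [NormedAddCommGroup H]
    [InnerProductSpace ℂ H] [CompleteSpace H] (π : G → (H →L[ℂ] H)) : Prop :=
  (∀ x, π x ∈ unitary (H →L[ℂ] H)) ∧ π 1 = 1 ∧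
    ∀ x y, ∃ z : Circle, π x * π y = (z : ℂ) • π (x * y)

/-- The projective kernel of a projective representation. -/
def ProjKer {G : Type*} [Group G] {H : Type*} [NormedAddCommGroup H]
    [InnerProductSpace ℂ H] [CompleteSpace H] (π : G → (H →L[ℂ] H)) : Set G :=
  {x | ∃ z : Circle, π x = (z : ℂ) • (1 : H →L[ℂ] H)}

/-- Projective faithfulness. -/
def PFaithful {G : Type*} [Group G] {H : Type*} [NormedAddCommGroup H]
    [InnerProductSpace ℂ H] [CompleteSpace H] (π : G → (H →L[ℂ] H)) : Prop :=
  ∀ x, x ∈ ProjKer π → x = 1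

/-- Irreducibility: the only closed invariant subspaces are `⊥` and `⊤`. -/
def IsIrreducibleRep {G : Type*} {H : Type*} [NormedAddCommGroup H]
    [InnerProductSpace ℂ H] [CompleteSpace H] (π : G → (H →L[ℂ] H)) : Prop :=
  ∀ K : Submodule ℂ H, IsClosed (K : Set H) → (∀ x, ∀ v ∈ K, π x v ∈ K) → K = ⊥ ∨ K = ⊤

/-- An (ordinary) unitary representation. -/
def IsUnitaryRep {G : Type*} [Group G] {H : Type*} [NormedAddCommGroup H]
    [InnerProductSpace ℂ H] [CompleteSpace H] (π : G → (H →L[ℂ] H)) : Prop :=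
  (∀ x, π x ∈ unitary (H →L[ℂ] H)) ∧ π 1 = 1 ∧ ∀ x y, π (x * y) = π x * π y

/-- A multiplier (2-cocycle) with values in the circle group. -/
def IsMultiplier {G : Type*} [Group G] (ζ : G → G → Circle) : Prop :=
  (∀ x, ζ 1 x = 1) ∧ (∀ x, ζ x 1 = 1) ∧
    ∀ x y z, ζ x y * ζ (x * y) z = ζ x (y * z) * ζ y z

/-- A normalised multiplier. -/
def IsNormalised {G : Type*} [Group G] (ζ : G → G → Circle) : Prop :=
  ∀ x : G, ζ x x⁻¹ = 1

/-- A ζ-representation of `G`. -/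
def IsZetaRep {G : Type*} [Group G] {H : Type*} [NormedAddCommGroup H]
    [InnerProductSpace ℂ H] [CompleteSpace H] (ζ : G → G → Circle)
    (π : G → (H →L[ℂ] H)) : Prop :=
  (∀ x, π x ∈ unitary (H →L[ℂ] H)) ∧ π 1 = 1 ∧
    ∀ x y, π x * π y = ((ζ x y : ℂ)) • π (x * y)

/-- A ζ-representation of a subgroup `N` of `G` (with respect to the restriction of ζ). -/
def IsZetaRepOn {G : Type*} [Group G] {H : Type*} [NormedAddCommGroup H]
    [InnerProductSpace ℂ H] [CompleteSpace H] (ζ : G → G → Circle) (N : Subgroup G)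
    (σ : N → (H →L[ℂ] H)) : Prop :=
  (∀ x, σ x ∈ unitary (H →L[ℂ] H)) ∧ σ 1 = 1 ∧
    ∀ x y : N, σ x * σ y = ((ζ (x : G) (y : G) : ℂ)) • σ (x * y)

open scoped Classical in
/-- The conjugate `σ^γ` of a projective representation `σ` of a (normal) subgroup `N`:
`σ^γ(x) = ζ(γ,x)·ζ(γx,γ⁻¹)·σ(γxγ⁻¹)`. -/
noncomputable def conjRep {G : Type*} [Group G] {H : Type*} [NormedAddCommGroup H]
    [InnerProductSpace ℂ H] [CompleteSpace H] (ζ : G → G → Circle) (N : Subgroup G)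
    (σ : N → (H →L[ℂ] H)) (γ : G) (x : N) : H →L[ℂ] H :=
  if h : γ * (x : G) * γ⁻¹ ∈ N then
    ((ζ γ (x : G) : ℂ) * (ζ (γ * (x : G)) γ⁻¹ : ℂ)) • σ ⟨γ * (x : G) * γ⁻¹, h⟩
  else 1

/-- `σ` is Γ-P-faithful: the projective Γ-kernel
`{x ∈ N : ∃ z ∈ T, σ^γ(x) = z·id for all γ}` is trivial. -/
def GammaPFaithful {G : Type*} [Group G] {H : Type*} [NormedAddCommGroup H]
    [InnerProductSpace ℂ H] [CompleteSpace H] (ζ : G → G → Circle) (N : Subgroup G)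
    (σ : N → (H →L[ℂ] H)) : Prop :=
  ∀ x : N, (∃ z : Circle, ∀ γ : G, conjRep ζ N σ γ x = (z : ℂ) • (1 : H →L[ℂ] H)) → x = 1

/-- A finite foot of `G`: a finite minimal (nontrivial) normal subgroup. -/
def IsFiniteFoot {G : Type*} [Group G] (N : Subgroup G) : Prop :=
  N.Normal ∧ N ≠ ⊥ ∧ (∀ M : Subgroup G, M.Normal → M ≠ ⊥ → M ≤ N → M = N) ∧ Finite N

/-- The minisocle: the subgroup generated by all finite feet. -/
def minisocle (G : Type*) [Group G] : Subgroup G :=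
  ⨆ (N : Subgroup G) (_ : IsFiniteFoot N), N

/-- Property (Fab): the normal subgroup generated by any single conjugacy class has finite
abelianisation. -/
def PropertyFab (G : Type*) [Group G] : Prop :=
  ∀ g : G, Finite (Abelianization (Subgroup.normalClosure ({g} : Set G)))

/-! Let `Δ` be the subgroup of `U(H)` generated by the operators `π x`. Its image in the projective
unitary group `U(H) ⧸ T` is the image of `Γ`, which is a copy of `Γ` by projective faithfulness, so
`Δ ⧸ (Δ ∩ T)` is isomorphic to `Γ`. Since `Δ` acts irreducibly, Schur's lemma identifies `Δ ∩ T`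
with the centre of `Δ`. -/

open Cardinal

universe u v

section FunctionalCalculus

variable {𝕜 A : Type*} {p : A → Prop} [RCLike 𝕜] [Ring A] [StarRing A] [TopologicalSpace A]
  [Algebra 𝕜 A] [ContinuousFunctionalCalculus 𝕜 A p]

theorem exists_cfc_mul_cfc_eq_zero {a : A} (ha : p a) {b c : 𝕜} (hb : b ∈ spectrum 𝕜 a)
    (hc : c ∈ spectrum 𝕜 a) (hbc : b ≠ c) :
    ∃ f g : 𝕜 → 𝕜, cfc f a ≠ 0 ∧ cfc g a ≠ 0 ∧ cfc f a * cfc g a = 0 := by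
  -- `d s t` is the positive part of `x ↦ dist x t - dist x s`: it does not vanish at `s`, and
  -- `d s t * d t s` is the product of the positive and negative parts of one function.
  let d (s t x : 𝕜) : 𝕜 := ((max 0 (dist x t - dist x s) : ℝ) : 𝕜)
  have continuous_d (s t : 𝕜) : Continuous (d s t) := by fun_prop
  have cfc_d_ne_zero {s t : 𝕜} (hs : s ∈ spectrum 𝕜 a) (hst : s ≠ t) : cfc (d s t) a ≠ 0 := by
    rw [← cfc_zero 𝕜 a, Ne, cfc_eq_cfc_iff_eqOn (hf := (continuous_d s t).continuousOn)]
    intro h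
    simpa [d, hst] using h hs
  have d_mul_d (x : 𝕜) : d b c x * d c b x = 0 := by
    rcases le_total (dist x b) (dist x c) with h | h <;> simp [d, h]
  refine ⟨d b c, d c b, cfc_d_ne_zero hb hbc, cfc_d_ne_zero hc hbc.symm, ?_⟩
  rw [← cfc_mul (d b c) (d c b) a (continuous_d b c).continuousOn (continuous_d c b).continuousOn]
  simp only [d_mul_d, cfc_const_zero]

end FunctionalCalculus

section Irreducible

variable {G G' H : Type*} [NormedAddCommGroup H] [InnerProductSpace ℂ H] [CompleteSpace H]
  {π : G → (H →L[ℂ] H)}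

theorem IsIrreducibleRep.of_range_subset {ρ : G' → (H →L[ℂ] H)} (hπ : IsIrreducibleRep π)
    (h : Set.range π ⊆ Set.range ρ) : IsIrreducibleRep ρ := by
  refine fun K hK hinv => hπ K hK fun x => ?_
  obtain ⟨y, hy⟩ := h ⟨x, rfl⟩
  exact hy ▸ hinv y

theorem IsIrreducibleRep.eq_zero_or_eq_zero_of_mul_eq_zero (hπ : IsIrreducibleRep π)
    {S T : H →L[ℂ] H} (hS : ∀ x, Commute S (π x)) (hST : S * T = 0) : S = 0 ∨ T = 0 := by
  have hinv (x : G) : ∀ v ∈ S.ker, π x v ∈ S.ker := fun v (hv : S v = 0) =>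
    calc S (π x v) = π x (S v) := DFunLike.congr_fun (hS x).eq v
      _ = 0 := by rw [hv, map_zero]
  have hT (v : H) : T v ∈ S.ker := DFunLike.congr_fun hST v
  rcases hπ S.ker S.isClosed_ker hinv with hker | hker
  · exact .inr (ContinuousLinearMap.ext fun v => by simpa [hker] using hT v)
  · exact .inl (ContinuousLinearMap.ext fun v => hker.ge Submodule.mem_top)

/-- **Schur's lemma** for normal operators. -/
theorem IsIrreducibleRep.exists_eq_smul_one (hπ : IsIrreducibleRep π) {T : H →L[ℂ] H}
    (hT : IsStarNormal T) (hcomm : ∀ x, Commute T (π x)) : ∃ c : ℂ, T = c • 1 := by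
  have hcfc (f : ℂ → ℂ) (x : G) : Commute (cfc f T) (π x) :=
    (hcomm x).cfc (hT.commute_star_left (hcomm x)) f
  have hspec : (spectrum ℂ T).Subsingleton := fun b hb c hc => by
    by_contra hbc
    obtain ⟨f, g, hf, hg, hfg⟩ := exists_cfc_mul_cfc_eq_zero hT hb hc hbc
    exact (hπ.eq_zero_or_eq_zero_of_mul_eq_zero (hcfc f) hfg).elim hf hg
  obtain ⟨c, hc⟩ : ∃ c, spectrum ℂ T ⊆ {c} :=
    hspec.eq_empty_or_singleton.elim (fun h => ⟨0, by simp [h]⟩) fun ⟨c, h⟩ => ⟨c, h.subset⟩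
  exact ⟨c, by rw [CFC.eq_algebraMap_of_spectrum_subset_singleton T c hc,
    Algebra.algebraMap_eq_smul_one]⟩

end Irreducible

section UnitaryScalar

variable (A : Type*) [Ring A] [StarRing A] [Algebra ℂ A] [StarModule ℂ A]

/-- The embedding of the circle group into the unitary group of a complex ⋆-algebra by scalar
multiples of the identity; its range is the subgroup `T` of `U(H)`. -/
def unitaryScalar : Circle →* unitary A where
  toFun z := ⟨(z : ℂ) • 1, Unitary.smul_mem_of_mem
    (by simp [Unitary.mem_iff, ← Circle.coe_inv_eq_conj]) (one_mem _)⟩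
  map_one' := by ext; simp
  map_mul' z w := by ext; simp [smul_smul, mul_comm]

variable {A}

@[simp]
theorem coe_unitaryScalar (z : Circle) : (unitaryScalar A z : A) = (z : ℂ) • 1 := rfl

theorem unitaryScalar_commute (z : Circle) (u : unitary A) : Commute (unitaryScalar A z) u := by
  ext; simp

theorem mem_range_unitaryScalar {u : unitary A} :
    u ∈ (unitaryScalar A).range ↔ ∃ z : Circle, (u : A) = (z : ℂ) • 1 := by
  simp [MonoidHom.mem_range, Subtype.ext_iff, eq_comm]

instance normal_range_unitaryScalar : (unitaryScalar A).range.Normal where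
  conj_mem := by
    rintro _ ⟨z, rfl⟩ u
    exact ⟨z, by rw [← (unitaryScalar_commute z u).eq, mul_inv_cancel_right]⟩

theorem mem_range_unitaryScalar_of_eq_smul_one {A : Type*} [NormedRing A] [StarRing A]
    [CStarRing A] [NormedAlgebra ℂ A] [StarModule ℂ A] {u : unitary A} {c : ℂ}
    (hu : (u : A) = c • 1) : u ∈ (unitaryScalar A).range := by
  rw [mem_range_unitaryScalar]
  rcases subsingleton_or_nontrivial A with _ | _
  · exact ⟨1, Subsingleton.elim _ _⟩
  · have hc : ‖c‖ = 1 := by simpa [hu, norm_smul] using CStarRing.norm_coe_unitary u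
    exact ⟨⟨c, mem_sphere_zero_iff_norm.mpr hc⟩, hu⟩

end UnitaryScalar

section UnitarySubgroup

variable {H : Type*} [NormedAddCommGroup H] [InnerProductSpace ℂ H] [CompleteSpace H]

theorem isUnitaryRep_coe (Δ : Subgroup (unitary (H →L[ℂ] H))) :
    IsUnitaryRep fun u : Δ => ((u : unitary (H →L[ℂ] H)) : H →L[ℂ] H) :=
  ⟨fun u => u.1.2, rfl, fun _ _ => rfl⟩

theorem subgroupOf_range_unitaryScalar_eq_center {Δ : Subgroup (unitary (H →L[ℂ] H))}
    (hΔ : IsIrreducibleRep fun u : Δ => ((u : unitary (H →L[ℂ] H)) : H →L[ℂ] H)) :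
    (unitaryScalar (H →L[ℂ] H)).range.subgroupOf Δ = Subgroup.center Δ := by
  ext u
  rw [Subgroup.mem_subgroupOf, Subgroup.mem_center_iff]
  constructor
  · rintro ⟨z, hz⟩ v
    have hcomm : Commute u.1 v.1 := hz ▸ unitaryScalar_commute z v.1
    exact Subtype.ext hcomm.symm.eq
  · intro hu
    have hcomm (v : Δ) : Commute (u.1 : H →L[ℂ] H) v.1 :=
      congrArg (fun w : Δ => (w.1 : H →L[ℂ] H)) (hu v).symm
    obtain ⟨c, hc⟩ := hΔ.exists_eq_smul_one (Unitary.coe_isStarNormal u.1) hcomm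
    exact mem_range_unitaryScalar_of_eq_smul_one hc

end UnitarySubgroup

section ClosureRange

theorem lift_mk_closure_range_le {ι : Type u} [Nonempty ι] {G : Type v} [Group G] (f : ι → G) :
    lift.{u} #(Subgroup.closure (Set.range f)) ≤ max (lift.{v} #ι) ℵ₀ := by
  rw [← FreeGroup.range_lift_eq_closure]
  calc lift.{u} #(FreeGroup.lift f).range
      ≤ lift.{v} #(FreeGroup ι) :=
        lift_mk_le_lift_mk_of_surjective (FreeGroup.lift f).rangeRestrict_surjective
    _ = max (lift.{v} #ι) ℵ₀ := by simp

variable {Γ G : Type*} [Group Γ] [Group G] {N : Subgroup G} [N.Normal] {s : Γ → G}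
  {f : Γ →* G ⧸ N}

theorem range_mk'_comp_subtype_closure_range (hf : ∀ x, f x = s x) :
    ((QuotientGroup.mk' N).comp (Subgroup.closure (Set.range s)).subtype).range = f.range := by
  have hs : QuotientGroup.mk' N ∘ s = f := funext fun x => (hf x).symm
  rw [MonoidHom.range_comp, Subgroup.range_subtype, MonoidHom.map_closure, ← Set.range_comp, hs,
    ← MonoidHom.coe_range, Subgroup.closure_eq]

/-- If `s` lifts an injective homomorphism `Γ →* G ⧸ N`, then `Γ` is the quotient by `N` of the
subgroup generated by the lift. -/
noncomputable def closureRangeQuotientEquiv (hf : ∀ x, f x = s x) (hinj : Function.Injective f) :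
    Subgroup.closure (Set.range s) ⧸ N.subgroupOf (Subgroup.closure (Set.range s)) ≃* Γ :=
  let q := (QuotientGroup.mk' N).comp (Subgroup.closure (Set.range s)).subtype
  have hker : N.subgroupOf (Subgroup.closure (Set.range s)) = q.ker := by
    rw [← MonoidHom.comap_ker, QuotientGroup.ker_mk', Subgroup.subgroupOf]
  (QuotientGroup.quotientMulEquivOfEq hker).trans <|
    (QuotientGroup.quotientKerEquivRange q).trans <|
      (MulEquiv.subgroupCongr (range_mk'_comp_subtype_closure_range hf)).trans
        (MonoidHom.ofInjective hinj).symm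

end ClosureRange

namespace IsProjUnitaryRep

variable {Γ H : Type*} [Group Γ] [NormedAddCommGroup H] [InnerProductSpace ℂ H] [CompleteSpace H]
  {π : Γ → (H →L[ℂ] H)} (hπ : IsProjUnitaryRep π)

/-- A projective unitary representation as a map into the unitary group. -/
def toUnitary (x : Γ) : unitary (H →L[ℂ] H) := ⟨π x, hπ.1 x⟩

theorem exists_toUnitary_mul (x y : Γ) :
    ∃ z, hπ.toUnitary x * hπ.toUnitary y = hπ.toUnitary (x * y) * unitaryScalar _ z := by
  obtain ⟨z, hz⟩ := hπ.2.2 x y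
  exact ⟨z, Subtype.ext (by simpa [toUnitary] using hz)⟩

/-- The homomorphism into the projective unitary group `U(H) ⧸ T` induced by a projective unitary
representation. -/
noncomputable def toProjectiveUnitary :
    Γ →* unitary (H →L[ℂ] H) ⧸ (unitaryScalar (H →L[ℂ] H)).range :=
  MonoidHom.mk' (fun x => hπ.toUnitary x) fun x y => by
    obtain ⟨z, hz⟩ := hπ.exists_toUnitary_mul x y
    rw [← QuotientGroup.mk_mul, hz,
      QuotientGroup.mk_mul_of_mem _ (MonoidHom.mem_range.mpr ⟨z, rfl⟩)]

theorem toProjectiveUnitary_injective (hfaith : PFaithful π) :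
    Function.Injective hπ.toProjectiveUnitary :=
  (injective_iff_map_eq_one _).mpr fun x hx =>
    hfaith x (mem_range_unitaryScalar.mp ((QuotientGroup.eq_one_iff (hπ.toUnitary x)).mp hx))

end IsProjUnitaryRep

theorem stmt_2_general {Γ : Type u} [Group Γ] {H : Type v} [NormedAddCommGroup H]
    [InnerProductSpace ℂ H] [CompleteSpace H] {π : Γ → (H →L[ℂ] H)} (hπ : IsProjUnitaryRep π)
    (hirr : IsIrreducibleRep π) (hfaith : PFaithful π) :
    ∃ Δ : Subgroup (unitary (H →L[ℂ] H)),
      lift.{u} #Δ ≤ max (lift.{v} #Γ) ℵ₀ ∧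
      IsIrreducibleRep (fun u : Δ => ((u : unitary (H →L[ℂ] H)) : H →L[ℂ] H)) ∧
      Nonempty ((Δ ⧸ Subgroup.center Δ) ≃* Γ) := by
  let Δ := Subgroup.closure (Set.range hπ.toUnitary)
  have hΔ : IsIrreducibleRep fun u : Δ => ((u : unitary (H →L[ℂ] H)) : H →L[ℂ] H) :=
    hirr.of_range_subset <| Set.range_subset_iff.mpr fun x =>
      ⟨⟨hπ.toUnitary x, Subgroup.subset_closure ⟨x, rfl⟩⟩, rfl⟩
  have e : Δ ⧸ (unitaryScalar (H →L[ℂ] H)).range.subgroupOf Δ ≃* Γ :=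
    closureRangeQuotientEquiv (f := hπ.toProjectiveUnitary) (fun _ => rfl)
      (hπ.toProjectiveUnitary_injective hfaith)
  have hcenter := subgroupOf_range_unitaryScalar_eq_center hΔ
  exact ⟨Δ, lift_mk_closure_range_le _, hΔ,
    ⟨(QuotientGroup.quotientMulEquivOfEq hcenter.symm).trans e⟩⟩

/-- Countable version: if a countable group Γ has an irreducible, projectively faithful
projective unitary representation, then there is a countable group Δ admitting a faithful
irreducible unitary representation with Δ/Z(Δ) ≅ Γ. -/
theorem stmt_2 (Γ : Type) [Group Γ] [Countable Γ]
    (H : Type) [NormedAddCommGroup H] [InnerProductSpace ℂ H] [CompleteSpace H]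
    (π : Γ → (H →L[ℂ] H)) (hπ : IsProjUnitaryRep π) (hirr : IsIrreducibleRep π)
    (hfaith : PFaithful π) :
    ∃ (Δ : Type) (_ : Group Δ) (_ : Countable Δ) (K : Type) (_ : NormedAddCommGroup K)
      (_ : InnerProductSpace ℂ K) (_ : CompleteSpace K) (φ : Δ → (K →L[ℂ] K)),
      IsUnitaryRep φ ∧ Function.Injective φ ∧ IsIrreducibleRep φ ∧
        Nonempty ((Δ ⧸ Subgroup.center Δ) ≃* Γ) := by
  obtain ⟨Δ, hcard, hΔ, e⟩ := stmt_2_general hπ hirr hfaith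
  exact ⟨Δ, inferInstance, mk_le_aleph0_iff.mp (by simpa using hcard), H, inferInstance,
    inferInstance, inferInstance, _, isUnitaryRep_coe Δ,
    Subtype.val_injective.comp Subtype.val_injective, hΔ, e⟩
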